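/- arXiv:2107.00251 — 6 statements merged into one kernel-verified Lean document; each statement's English description precedes it below -/
import Mathlib

section
/- For every isotonic function g : V → ℝ, the weighted L0 error of g is at least ∑_{v ∈ V} w(v) minus the maximum of ∑_{v ∈ C} w(v) over all antichains C of the violator relation ≺ᵥ. -/
/-- The violator relation: `u ≺ᵥ v` iff `u < v` in the partial order and `f u > f v`. -/
def Viol {V : Type*} [PartialOrder V] (f : V → ℝ) (u v : V) : Prop :=
  u < v ∧ f v < f u

/-!
If `g` is isotonic, then `f` is monotone on the set where it agrees with `g`, so this set is an
antichain of the violator relation. The error of `g` is the weight of the complement of this set.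
-/

theorem forall_not_viol_iff_monotoneOn {V : Type*} [PartialOrder V] {f : V → ℝ} {C : Set V} :
    (∀ u ∈ C, ∀ v ∈ C, ¬ Viol f u v) ↔ MonotoneOn f C := by
  constructor
  · intro hC u hu v hv huv
    rcases huv.eq_or_lt with rfl | hlt
    · exact le_rfl
    · exact not_lt.mp fun hf => hC u hu v hv ⟨hlt, hf⟩
  · rintro hf u hu v hv ⟨hlt, hgt⟩
    exact (hf hu hv hlt.le).not_gt hgt

theorem sum_mul_ite_zero_one {ι R : Type*} [NonAssocRing R] (s : Finset ι) (w : ι → R)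
    (p : ι → Prop) [DecidablePred p] :
    ∑ i ∈ s, w i * (if p i then 0 else 1) = ∑ i ∈ s, w i - ∑ i ∈ s with p i, w i := by
  simp only [mul_ite, mul_zero, mul_one, Finset.sum_filter, ← Finset.sum_sub_distrib]
  refine Finset.sum_congr rfl fun i _ => ?_
  split_ifs <;> simp

theorem le_csSup_setOf_of_finite {ι α : Type*} [Finite ι] [ConditionallyCompleteLattice α]
    {p : ι → Prop} (F : ι → α) {i : ι} (hi : p i) :
    F i ≤ sSup {x | ∃ j, p j ∧ x = F j} := by
  have hfinite : {x | ∃ j, p j ∧ x = F j}.Finite :=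
    (Set.finite_range F).subset fun _ ⟨j, _, hx⟩ => ⟨j, hx.symm⟩
  have : Nonempty α := ⟨F i⟩
  exact le_csSup hfinite.bddAbove ⟨i, hi, rfl⟩

theorem L0_error_ge_total_sub_max_antichain_general {V α R : Type*} [Preorder V] [Fintype V]
    [Preorder α] [DecidableEq α] [NonAssocRing R] [ConditionallyCompleteLattice R]
    [IsOrderedAddMonoid R] (f : V → α) (w : V → R) {g : V → α} (hg : Monotone g) :
    ∑ v, w v * (if g v = f v then 0 else 1) ≥
      (∑ v, w v) -
        sSup {x : R | ∃ C : Finset V, MonotoneOn f (C : Set V) ∧ x = ∑ v ∈ C, w v} := by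
  have hagree : MonotoneOn f (({v | g v = f v} : Finset V) : Set V) :=
    (hg.monotoneOn _).congr fun v hv => by simpa using hv
  rw [sum_mul_ite_zero_one]
  exact sub_le_sub_left (le_csSup_setOf_of_finite (fun C : Finset V => ∑ v ∈ C, w v) hagree) _

/-- The weighted L0 error of any isotonic function is at least the total weight minus
the maximum weight of an antichain of the violator relation. -/
theorem L0_error_ge_total_sub_max_antichain {V : Type*} [PartialOrder V] [Fintype V]
    (f w : V → ℝ) (hw : ∀ v, 0 ≤ w v)
    (g : V → ℝ) (hg : ∀ u v : V, u ≤ v → g u ≤ g v) :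
    ∑ v, w v * (if g v = f v then 0 else 1) ≥
      (∑ v, w v) -
        sSup {x : ℝ | ∃ C : Finset V,
          (∀ u ∈ C, ∀ v ∈ C, ¬ Viol f u v) ∧ x = ∑ v ∈ C, w v} := by
  simpa only [← forall_not_viol_iff_monotoneOn, Finset.mem_coe] using
    L0_error_ge_total_sub_max_antichain_general f w (g := g) hg
end

section
/- Suppose w(v) > 0 for all v ∈ V. Then there exists an isotonic g : V → ℝ that minimizes the weighted L0 error and satisfies g(v) = f(v) for every v that is contained in no violating pair (i.e., every v such that there is no u with u ≺ᵥ v or v ≺ᵥ u). Equivalently, every maximum-weight antichain of ≺ᵥ contains all vertices that are in no violating pair. -/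
/-!
The antichains of the violator relation are the sets on which `f` is monotone. The set where an
isotonic `g` agrees with `f` is such a set, and conversely `f` restricted to such a set extends to
an isotonic function, so minimizing the error means maximizing the weight of the set of agreement.
A vertex in no violating pair can be added to any antichain.
-/

lemma not_viol_iff {V : Type*} [PartialOrder V] {f : V → ℝ} {u v : V} :
    ¬ Viol f u v ↔ (u ≤ v → f u ≤ f v) := by
  constructor
  · intro hviol huv
    rcases huv.eq_or_lt with rfl | hlt
    · exact le_rfl
    · exact not_lt.1 fun hf ↦ hviol ⟨hlt, hf⟩
  · exact fun himp hviol ↦ (himp hviol.1.le).not_gt hviol.2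

section Nonviolator

variable {V α : Type*} [Preorder V] [Preorder α] {f : V → α}

/-- `v` is in no violating pair of `f`. Violation is expressed as failure of
`u ≤ v → f u ≤ f v`, which is the relation `Viol` for real-valued functions on partial orders and
also makes sense on preorders. -/
def IsNonviolator (f : V → α) (v : V) : Prop :=
  ∀ u, (u ≤ v → f u ≤ f v) ∧ (v ≤ u → f v ≤ f u)

lemma monotoneOn_union_of_isNonviolator {s t : Set V} (hs : MonotoneOn f s)
    (ht : ∀ v ∈ t, IsNonviolator f v) : MonotoneOn f (s ∪ t) := by
  rintro a (has | hat) b (hbs | hbt)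
  · exact hs has hbs
  · exact (ht b hbt a).1
  · exact (ht a hat b).2
  · exact (ht a hat b).2

end Nonviolator

lemma exists_monotone_eqOn_of_monotoneOn {V α : Type*} [Preorder V] [CompleteLattice α] {f : V → α}
    {s : Set V} (hf : MonotoneOn f s) : ∃ g : V → α, Monotone g ∧ Set.EqOn g f s := by
  refine ⟨fun v ↦ ⨆ u ∈ s ∩ Set.Iic v, f u, fun v v' hvv' ↦ ?_, fun v hv ↦ le_antisymm ?_ ?_⟩
  · exact biSup_mono fun u hu ↦ ⟨hu.1, hu.2.trans hvv'⟩
  · exact iSup₂_le fun u hu ↦ hf hu.1 hv hu.2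
  · exact le_iSup₂_of_le v ⟨hv, le_rfl⟩ le_rfl

lemma exists_monotone_eqOn_of_finite_range {V α : Type*} [Preorder V] [LinearOrder α] {f : V → α}
    {s : Set V} (hrange : (Set.range f).Finite) (hf : MonotoneOn f s) :
    ∃ g : V → α, Monotone g ∧ Set.EqOn g f s := by
  cases isEmpty_or_nonempty V
  · exact ⟨f, fun v ↦ isEmptyElim v, fun _ _ ↦ rfl⟩
  -- The finite range of `f` is a complete linear order, even if `α` is not.
  · let : Fintype (Set.range f) := hrange.fintype
    let : CompleteLinearOrder (Set.range f) := Fintype.toCompleteLinearOrderOfNonempty _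
    have hf_range : MonotoneOn (Set.rangeFactorization f) s := hf
    obtain ⟨g, hg, hgf⟩ := exists_monotone_eqOn_of_monotoneOn hf_range
    exact ⟨fun v ↦ g v, fun _ _ huv ↦ hg huv, fun v hv ↦ congrArg Subtype.val (hgf hv)⟩

section MaxWeight

variable {V α M : Type*} [Preorder V] [Preorder α] [AddCommMonoid M] {f : V → α} {w : V → M}

/-- `C` has maximum weight among the finite sets on which `f` is monotone, that is, among the finite
antichains of the violator relation. -/
def IsMaxWeightMonotoneOn [LE M] (f : V → α) (w : V → M) (C : Finset V) : Prop :=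
  MonotoneOn f C ∧ ∀ D : Finset V, MonotoneOn f D → ∑ v ∈ D, w v ≤ ∑ v ∈ C, w v

lemma exists_isMaxWeightMonotoneOn [Finite V] [LinearOrder M] (f : V → α) (w : V → M) :
    ∃ C, IsMaxWeightMonotoneOn f w C :=
  Set.exists_max_image {C : Finset V | MonotoneOn f C} (fun C ↦ ∑ v ∈ C, w v) (Set.toFinite _)
    ⟨∅, by simp [MonotoneOn]⟩

lemma IsMaxWeightMonotoneOn.mem_of_isNonviolator [PartialOrder M] [IsOrderedCancelAddMonoid M]
    {C : Finset V} (hC : IsMaxWeightMonotoneOn f w C) {v : V} (hv : IsNonviolator f v)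
    (hwv : 0 < w v) : v ∈ C := by
  classical
  by_contra hvC
  have hmono : MonotoneOn f (insert v C : Finset V) := by
    rw [Finset.coe_insert, ← Set.union_singleton]
    exact monotoneOn_union_of_isNonviolator hC.1 (by simpa using hv)
  have hle : w v + ∑ u ∈ C, w u ≤ ∑ u ∈ C, w u :=
    Finset.sum_insert hvC (f := w) ▸ hC.2 _ hmono
  exact hle.not_gt (lt_add_of_pos_left _ hwv)

end MaxWeight

section L0Error

variable {V α M : Type*} [Fintype V] [DecidableEq α]

/-- The weighted L0 error of `g` as an approximation of `f`. Summing over the disagreement set,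
rather than multiplying by its indicator, allows weights in an additive monoid. -/
def l0Error [AddCommMonoid M] (w : V → M) (f g : V → α) : M :=
  ∑ v with g v ≠ f v, w v

lemma l0Error_eq_sum_mul_ite [NonAssocSemiring M] (w : V → M) (f g : V → α) :
    l0Error w f g = ∑ v, w v * (if g v = f v then 0 else 1) := by
  simp only [l0Error, Finset.sum_filter, ite_not, mul_ite, mul_zero, mul_one]

lemma l0Error_le_l0Error_of_sum_agree_le [AddCommMonoid M] [PartialOrder M]
    [IsOrderedCancelAddMonoid M] {w : V → M} {f g h : V → α}
    (hle : ∑ v with h v = f v, w v ≤ ∑ v with g v = f v, w v) :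
    l0Error w f g ≤ l0Error w f h := by
  have sum_agree_add_l0Error (k : V → α) : ∑ v with k v = f v, w v + l0Error w f k = ∑ v, w v :=
    Finset.sum_filter_add_sum_filter_not _ _ _
  refine le_of_add_le_add_left (a := ∑ v with h v = f v, w v) ?_
  calc
    _ ≤ ∑ v with g v = f v, w v + l0Error w f g := by gcongr
    _ = ∑ v with h v = f v, w v + l0Error w f h := by simp only [sum_agree_add_l0Error]

lemma IsMaxWeightMonotoneOn.l0Error_le [Preorder V] [Preorder α] [AddCommMonoid M]
    [PartialOrder M] [IsOrderedCancelAddMonoid M] {f g h : V → α} {w : V → M} {C : Finset V}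
    (hC : IsMaxWeightMonotoneOn f w C) (hw : ∀ v, 0 ≤ w v) (hg : Set.EqOn g f C)
    (hh : Monotone h) : l0Error w f g ≤ l0Error w f h := by
  have hmono : MonotoneOn f ({v | h v = f v} : Finset V) :=
    (hh.monotoneOn _).congr fun v hv ↦ by simpa using hv
  refine l0Error_le_l0Error_of_sum_agree_le ?_
  calc
    ∑ v with h v = f v, w v ≤ ∑ v ∈ C, w v := hC.2 _ hmono
    _ ≤ ∑ v with g v = f v, w v :=
      Finset.sum_le_sum_of_subset_of_nonneg (fun v hv ↦ by simpa using hg hv) fun v _ _ ↦ hw v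

end L0Error

theorem L0_optimal_fixes_nonviolators_general {V α M : Type*} [Preorder V] [Fintype V]
    [LinearOrder α] [AddCommMonoid M] [LinearOrder M] [IsOrderedCancelAddMonoid M]
    (f : V → α) (w : V → M) (hw : ∀ v, 0 ≤ w v) :
    (∃ g : V → α, Monotone g ∧
      (∀ h : V → α, Monotone h → l0Error w f g ≤ l0Error w f h) ∧
      ∀ v, IsNonviolator f v → g v = f v) ∧
    ∀ C, IsMaxWeightMonotoneOn f w C → ∀ v, IsNonviolator f v → 0 < w v → v ∈ C := by
  refine ⟨?_, fun C hC v hv hwv ↦ hC.mem_of_isNonviolator hv hwv⟩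
  obtain ⟨C, hC⟩ := exists_isMaxWeightMonotoneOn f w
  have hmono : MonotoneOn f (C ∪ {v | IsNonviolator f v}) :=
    monotoneOn_union_of_isNonviolator hC.1 fun _ hv ↦ hv
  obtain ⟨g, hg, hgf⟩ := exists_monotone_eqOn_of_finite_range (Set.finite_range f) hmono
  exact ⟨g, hg, fun h hh ↦ hC.l0Error_le hw (hgf.mono Set.subset_union_left) hh,
    fun v hv ↦ hgf (Or.inr hv)⟩

/-- When all weights are positive, some L0-optimal isotonic regression leaves unchanged
every vertex contained in no violating pair; equivalently, every maximum-weight antichain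
of the violator relation contains all vertices in no violating pair. -/
theorem L0_optimal_fixes_nonviolators {V : Type*} [PartialOrder V] [Fintype V]
    [Nonempty V] (f w : V → ℝ) (hw : ∀ v, 0 < w v) :
    (∃ g : V → ℝ, Monotone g ∧
      (∀ h : V → ℝ, Monotone h →
        ∑ v, w v * (if g v = f v then 0 else 1) ≤
          ∑ v, w v * (if h v = f v then 0 else 1)) ∧
      (∀ v : V, (∀ u : V, ¬ Viol f u v ∧ ¬ Viol f v u) → g v = f v)) ∧
    (∀ C : Finset V, (∀ u ∈ C, ∀ v ∈ C, ¬ Viol f u v) →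
      (∀ D : Finset V, (∀ u ∈ D, ∀ v ∈ D, ¬ Viol f u v) → ∑ v ∈ D, w v ≤ ∑ v ∈ C, w v) →
      ∀ v : V, (∀ u : V, ¬ Viol f u v ∧ ¬ Viol f v u) → v ∈ C) := by
  simp only [not_viol_iff, ← l0Error_eq_sum_mul_ite]
  obtain ⟨hopt, hmem⟩ := L0_optimal_fixes_nonviolators_general f w fun v ↦ (hw v).le
  exact ⟨hopt, fun C hC hmax v hv ↦ hmem C ⟨hC, hmax⟩ v hv (hw v)⟩
end

section
/- There exists an isotonic function g : V → ℝ that minimizes the weighted L1 error over all isotonic functions and additionally satisfies g(v) ∈ f(V) for every v ∈ V; that is, there is always an L1-optimal isotonic regression whose regression values are values of the original function. -/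
/-!
Only finitely many monotone functions take all their values in the range of `f`, so it suffices to
turn an arbitrary monotone `h` into such a function without increasing its error. First clamp `h`
to the interval spanned by the values of `f`. If `h` still takes a value `c` outside the range of
`f`, let `a < c < b` be the neighbours of `c` among the values of `f` and `h`. As the level `c` of
`h` is moved from `a` to `b`, `h` stays monotone and no value of `f` is crossed, so the error is an
affine function of the level and is no larger than before at one of the two ends. Moving the level
there leaves `h` with fewer values outside the range of `f`.
-/

section MoveLevel

variable {V K : Type*} [DecidableEq K] {h : V → K} {c d : K}

/-- The function `h` with its level set at height `c` moved to height `d`, merging it with the level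
set already at height `d`, if any. It is the elementary step of the rounding procedure. -/
def moveLevel (h : V → K) (c d : K) : V → K := fun v => if h v = c then d else h v

theorem monotone_moveLevel [Preorder V] [PartialOrder K] (hh : Monotone h)
    (hlt : ∀ v, h v < c → h v ≤ d) (hgt : ∀ v, c < h v → d ≤ h v) : Monotone (moveLevel h c d) := by
  intro x y hxy
  have hle := hh hxy
  unfold moveLevel
  split_ifs with hx hy hy
  · exact le_rfl
  · exact hgt y (lt_of_le_of_ne (hx ▸ hle) (Ne.symm hy))
  · exact hlt x (lt_of_le_of_ne (hy ▸ hle) hx)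
  · exact hle

theorem range_moveLevel_subset : Set.range (moveLevel h c d) ⊆ insert d (Set.range h \ {c}) := by
  rintro _ ⟨v, rfl⟩
  unfold moveLevel
  split_ifs with hv
  · exact Set.mem_insert d _
  · exact Set.mem_insert_of_mem d ⟨⟨v, rfl⟩, hv⟩

theorem range_moveLevel_sdiff_ssubset {S : Set K} (hc : c ∈ Set.range h \ S)
    (hd : d ∈ Set.range h ∪ S) (hdc : d ≠ c) :
    Set.range (moveLevel h c d) \ S ⊂ Set.range h \ S := by
  refine (Set.ssubset_iff_of_subset ?_).2 ⟨c, hc, fun hmem => ?_⟩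
  · rintro x ⟨hx, hxS⟩
    obtain rfl | hx := range_moveLevel_subset hx
    · exact ⟨hd.resolve_right hxS, hxS⟩
    · exact ⟨hx.1, hxS⟩
  · obtain rfl | hx := range_moveLevel_subset hmem.1
    · exact hdc rfl
    · exact hx.2 rfl

end MoveLevel

theorem sub_mul_abs_sub_eq_of_notMem_Ioo {K : Type*} [CommRing K] [LinearOrder K]
    [IsStrictOrderedRing K] {a b c y : K} (hac : a ≤ c) (hcb : c ≤ b) (hy : y ∉ Set.Ioo a b) :
    (b - a) * |c - y| = (b - c) * |a - y| + (c - a) * |b - y| := by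
  obtain hya | hby : y ≤ a ∨ b ≤ y := by
    simpa only [Set.mem_Ioo, not_and_or, not_lt] using hy
  · rw [abs_of_nonneg (by linarith), abs_of_nonneg (by linarith), abs_of_nonneg (by linarith)]
    ring
  · rw [abs_of_nonpos (by linarith), abs_of_nonpos (by linarith), abs_of_nonpos (by linarith)]
    ring

section L1Error

variable {V K : Type*} [Fintype V] [CommRing K] [LinearOrder K]
  {w f h : V → K} {a b c : K}

/-- The `L1` error, with weights `w`, of `g` as an approximation of `f`. -/
def l1Error (w f g : V → K) : K := ∑ v, w v * |g v - f v|

variable [IsStrictOrderedRing K]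

theorem l1Error_projIcc_le (hw : ∀ v, 0 ≤ w v) (hab : a ≤ b) (hf : ∀ v, f v ∈ Set.Icc a b) :
    l1Error w f (fun v => Set.projIcc a b hab (h v)) ≤ l1Error w f h := by
  refine Finset.sum_le_sum fun v _ => mul_le_mul_of_nonneg_left ?_ (hw v)
  calc |(Set.projIcc a b hab (h v) : K) - f v|
      = |(Set.projIcc a b hab (h v) : K) - Set.projIcc a b hab (f v)| := by
        rw [Set.projIcc_of_mem hab (hf v)]
    _ ≤ |h v - f v| := Set.abs_projIcc_sub_projIcc hab

theorem sub_mul_l1Error_eq (w h : V → K) (hac : a ≤ c) (hcb : c ≤ b)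
    (hf : ∀ v, f v ∉ Set.Ioo a b) :
    (b - a) * l1Error w f h =
      (b - c) * l1Error w f (moveLevel h c a) + (c - a) * l1Error w f (moveLevel h c b) := by
  simp only [l1Error, moveLevel, Finset.mul_sum, ← Finset.sum_add_distrib]
  refine Finset.sum_congr rfl fun v _ => ?_
  split_ifs with hv
  · rw [hv]
    linear_combination w v * sub_mul_abs_sub_eq_of_notMem_Ioo hac hcb (hf v)
  · ring

theorem l1Error_moveLevel_le_or_le (w h : V → K) (hac : a < c) (hcb : c < b)
    (hf : ∀ v, f v ∉ Set.Ioo a b) :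
    l1Error w f (moveLevel h c a) ≤ l1Error w f h ∨
      l1Error w f (moveLevel h c b) ≤ l1Error w f h := by
  by_contra! hlt
  have haffine := sub_mul_l1Error_eq w h hac.le hcb.le hf
  have hleft := mul_lt_mul_of_pos_left hlt.1 (sub_pos.2 hcb)
  have hright := mul_lt_mul_of_pos_left hlt.2 (sub_pos.2 hac)
  linarith

variable [Preorder V]

theorem exists_monotone_moveLevel_l1Error_le (w : V → K) (hh : Monotone h) (hc : c ∉ Set.range f)
    (hlo : ∃ v, f v < c) (hhi : ∃ v, c < f v) :
    ∃ d ∈ Set.range h ∪ Set.range f, d ≠ c ∧ Monotone (moveLevel h c d) ∧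
      l1Error w f (moveLevel h c d) ≤ l1Error w f h := by
  set R : Set K := Set.range h ∪ Set.range f
  have hR : R.Finite := (Set.finite_range h).union (Set.finite_range f)
  have hhR (v : V) : h v ∈ R := Or.inl ⟨v, rfl⟩
  have hfR (v : V) : f v ∈ R := Or.inr ⟨v, rfl⟩
  obtain ⟨a, ⟨haR, hac⟩, ha⟩ : ∃ a, IsGreatest (R ∩ Set.Iio c) a :=
    Set.exists_max_image _ id (hR.inter_of_left _) (hlo.imp' f fun v hv => ⟨hfR v, hv⟩)
  obtain ⟨b, ⟨hbR, hcb⟩, hb⟩ : ∃ b, IsLeast (R ∩ Set.Ioi c) b :=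
    Set.exists_min_image _ id (hR.inter_of_left _) (hhi.imp' f fun v hv => ⟨hfR v, hv⟩)
  rw [Set.mem_Iio] at hac
  rw [Set.mem_Ioi] at hcb
  have hf (v : V) : f v ∉ Set.Ioo a b := by
    rintro ⟨hav, hvb⟩
    obtain hvc | hcv := lt_or_gt_of_ne fun hvc => hc ⟨v, hvc⟩
    · exact hav.not_ge (ha ⟨hfR v, hvc⟩)
    · exact hvb.not_ge (hb ⟨hfR v, hcv⟩)
  have hmono {d : K} (had : a ≤ d) (hdb : d ≤ b) : Monotone (moveLevel h c d) :=
    monotone_moveLevel hh (fun v hv => (ha ⟨hhR v, hv⟩).trans had)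
      fun v hv => hdb.trans (hb ⟨hhR v, hv⟩)
  have hab : a ≤ b := (hac.trans hcb).le
  obtain hle | hle := l1Error_moveLevel_le_or_le w h hac hcb hf
  · exact ⟨a, haR, hac.ne, hmono le_rfl hab, hle⟩
  · exact ⟨b, hbR, hcb.ne', hmono hab le_rfl, hle⟩

theorem exists_monotone_mem_range_l1Error_le_of_mem_Icc (w : V → K) {i j : V}
    (hf : ∀ v, f v ∈ Set.Icc (f i) (f j)) (hh : Monotone h)
    (hhf : ∀ v, h v ∈ Set.Icc (f i) (f j)) :
    ∃ g : V → K, Monotone g ∧ (∀ v, g v ∈ Set.range f) ∧ l1Error w f g ≤ l1Error w f h := by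
  induction hn : (Set.range h \ Set.range f).ncard using Nat.strong_induction_on
    generalizing h with
  | _ n ih =>
    by_cases hrange : ∀ v, h v ∈ Set.range f
    · exact ⟨h, hh, hrange, le_rfl⟩
    obtain ⟨v, hv⟩ := not_forall.1 hrange
    obtain ⟨d, hd, hdv, hmono, hle⟩ := exists_monotone_moveLevel_l1Error_le w hh hv
      ⟨i, lt_of_le_of_ne (hhf v).1 fun hi => hv ⟨i, hi⟩⟩
      ⟨j, lt_of_le_of_ne (hhf v).2 fun hj => hv ⟨j, hj.symm⟩⟩
    have hd_mem : d ∈ Set.Icc (f i) (f j) :=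
      Set.union_subset (Set.range_subset_iff.2 hhf) (Set.range_subset_iff.2 hf) hd
    have hmem (x : V) : moveLevel h (h v) d x ∈ Set.Icc (f i) (f j) := by
      unfold moveLevel
      split_ifs
      exacts [hd_mem, hhf x]
    have hcard : (Set.range (moveLevel h (h v) d) \ Set.range f).ncard < n :=
      hn ▸ Set.ncard_lt_ncard (range_moveLevel_sdiff_ssubset ⟨⟨v, rfl⟩, hv⟩ hd hdv)
        (Set.finite_range h).sdiff
    obtain ⟨g, hg, hgf, hgle⟩ := ih _ hcard hmono hmem rfl
    exact ⟨g, hg, hgf, hgle.trans hle⟩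

theorem exists_monotone_mem_range_l1Error_le (f : V → K) (hw : ∀ v, 0 ≤ w v) (hh : Monotone h) :
    ∃ g : V → K, Monotone g ∧ (∀ v, g v ∈ Set.range f) ∧ l1Error w f g ≤ l1Error w f h := by
  cases isEmpty_or_nonempty V
  · exact ⟨h, hh, isEmptyElim, le_rfl⟩
  obtain ⟨i, hi⟩ := Finite.exists_min f
  obtain ⟨j, hj⟩ := Finite.exists_max f
  have hf (v : V) : f v ∈ Set.Icc (f i) (f j) := ⟨hi v, hj v⟩
  have hclamp : Monotone fun v => (Set.projIcc (f i) (f j) (hi j) (h v) : K) :=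
    fun _ _ hxy => Set.monotone_projIcc (hi j) (hh hxy)
  obtain ⟨g, hg, hgf, hle⟩ := exists_monotone_mem_range_l1Error_le_of_mem_Icc w hf hclamp
    fun v => (Set.projIcc (f i) (f j) (hi j) (h v)).2
  exact ⟨g, hg, hgf, hle.trans (l1Error_projIcc_le hw (hi j) hf)⟩

theorem L1_optimal_with_values_in_range_general (f : V → K) (hw : ∀ v, 0 ≤ w v) :
    ∃ g : V → K, Monotone g ∧ (∀ v, g v ∈ Set.range f) ∧
      ∀ h : V → K, Monotone h → l1Error w f g ≤ l1Error w f h := by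
  have hfinite : {g : V → K | Monotone g ∧ ∀ v, g v ∈ Set.range f}.Finite :=
    (Set.Finite.pi' fun _ => Set.finite_range f).subset fun _ hg => hg.2
  obtain ⟨g₀, hg₀, hg₀f, -⟩ :=
    exists_monotone_mem_range_l1Error_le f hw (monotone_const (c := 0))
  obtain ⟨g, ⟨hg, hgf⟩, hmin⟩ := Set.exists_min_image _ (l1Error w f) hfinite
    ⟨g₀, hg₀, hg₀f⟩
  refine ⟨g, hg, hgf, fun h hh => ?_⟩
  obtain ⟨g', hg', hg'f, hle⟩ := exists_monotone_mem_range_l1Error_le f hw hh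
  exact (hmin g' ⟨hg', hg'f⟩).trans hle

end L1Error

/-- There is always an L1-optimal isotonic regression whose regression values are
values of the original function. -/
theorem L1_optimal_with_values_in_range {V : Type*} [PartialOrder V] [Fintype V]
    [Nonempty V] (f w : V → ℝ) (hw : ∀ v, 0 ≤ w v) :
    ∃ g : V → ℝ, Monotone g ∧ (∀ v : V, g v ∈ Set.range f) ∧
      ∀ h : V → ℝ, Monotone h →
        ∑ v, w v * |g v - f v| ≤ ∑ v, w v * |h v - f v| :=
  L1_optimal_with_values_in_range_general f hw
end

section
/- Let a < b be reals with f(V) ∩ (a,b) = ∅, and define g : V → {a,b} by g(v) = a if f(v) ≤ a and g(v) = b if f(v) ≥ b. For every function h : V → {a,b}, the weighted L1 error of h relative to f decomposes as ∑_{v} w(v)·|h(v) − f(v)| = ∑_{v} w(v)·|g(v) − f(v)| + (b − a)·∑_{v} w(v)·[h(v) ≠ g(v)]. Consequently, an isotonic {a,b}-valued h minimizes the weighted L1 distance to f among isotonic {a,b}-valued functions if and only if it minimizes the weighted Hamming (L0) distance to g among isotonic {a,b}-valued functions. -/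
/-!
Where `f v ≤ a` the rounded value `g v = a` separates `f v` from every point of `[a, b]`, and where
`b ≤ f v` so does `g v = b`. Hence `g` lies pointwise between `f` and `h`, the triangle inequality
through `g` is an equality, and the excess `∑ w |h - g|` is `b - a` times the Hamming distance
because two distinct points of `{a, b}` are `b - a` apart. Thus on `{a, b}`-valued functions the L1
error is an increasing affine function of the Hamming distance, and both have the same minimizers
over any set of such functions.
-/

section Minimizers

variable {α β γ : Type*} [LinearOrder β] [Preorder γ]

theorem isMinOn_iff_of_eqOn_strictMono_comp {F : α → γ} {G : α → β} {φ : β → γ} {s : Set α} {x : α}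
    (hφ : StrictMono φ) (hFG : Set.EqOn F (φ ∘ G) s) (hx : x ∈ s) :
    IsMinOn F s x ↔ IsMinOn G s x := by
  simp only [isMinOn_iff]
  refine forall₂_congr fun y hy => ?_
  rw [hFG hx, hFG hy, Function.comp_apply, Function.comp_apply, hφ.le_iff_le]

end Minimizers

section AbsSub

variable {G : Type*} [AddCommGroup G] [LinearOrder G] [IsOrderedAddMonoid G]

theorem abs_sub_eq_add_of_mem_uIcc {x y z : G} (hy : y ∈ Set.uIcc x z) :
    |x - z| = |y - z| + |x - y| := by
  rw [← sub_add_sub_cancel' y z x, abs_add_eq_add_abs_iff]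
  rcases Set.mem_uIcc.1 hy with ⟨hxy, hyz⟩ | ⟨hzy, hyx⟩
  · exact .inr ⟨sub_nonpos.2 hyz, sub_nonpos.2 hxy⟩
  · exact .inl ⟨sub_nonneg.2 hzy, sub_nonneg.2 hyx⟩

theorem abs_sub_eq_ite_of_eq_or_eq {a b x y : G} (hab : a ≤ b) (hx : x = a ∨ x = b)
    (hy : y = a ∨ y = b) : |x - y| = if x = y then 0 else b - a := by
  split_ifs with hxy
  · simp [hxy]
  · rcases hx with rfl | rfl <;> rcases hy with rfl | rfl
    · exact absurd rfl hxy
    · rw [abs_sub_comm, abs_of_nonneg (sub_nonneg.2 hab)]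
    · rw [abs_of_nonneg (sub_nonneg.2 hab)]
    · exact absurd rfl hxy

end AbsSub

section Rounding

variable {α : Type*} [LinearOrder α] {a b x y : α}

/-- Rounding to `{a, b}`: points `x ≤ a` go to `a` and all others to `b`. It is meant for `x`
outside the open interval `(a, b)`, whose points are sent to `b` by convention. -/
def roundToEndpoints (a b x : α) : α := if x ≤ a then a else b

theorem roundToEndpoints_eq_or_eq (a b x : α) :
    roundToEndpoints a b x = a ∨ roundToEndpoints a b x = b :=
  ite_eq_or_eq _ _ _

theorem roundToEndpoints_mem_uIcc (hx : x ≤ a ∨ b ≤ x) (hy : y ∈ Set.Icc a b) :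
    roundToEndpoints a b x ∈ Set.uIcc y x := by
  unfold roundToEndpoints
  split_ifs with hxa
  · exact Set.mem_uIcc_of_ge hxa hy.1
  · exact Set.mem_uIcc_of_le hy.2 (hx.resolve_left hxa)

end Rounding

section WeightedDistances

variable {V R : Type*} [Fintype V] [Ring R] [LinearOrder R]

/-- The weighted L1 error of `h` relative to `f`. The candidate `h` comes last, so that
`weightedL1Error w f` is the objective to be minimized. -/
def weightedL1Error (w f h : V → R) : R := ∑ v, w v * |h v - f v|

/-- The weighted Hamming (L0) distance from `h` to `g`: the total weight of the points where they
differ. As in `weightedL1Error`, the candidate `h` comes last. -/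
def weightedHammingDist (w g h : V → R) : R := ∑ v, w v * (if h v = g v then 0 else 1)

theorem weightedL1Error_eq_add_of_mem_uIcc [IsOrderedAddMonoid R] {w f g h : V → R}
    (hg : ∀ v, g v ∈ Set.uIcc (h v) (f v)) :
    weightedL1Error w f h = weightedL1Error w f g + weightedL1Error w g h := by
  simp only [weightedL1Error, ← Finset.sum_add_distrib, ← mul_add,
    abs_sub_eq_add_of_mem_uIcc (hg _)]

end WeightedDistances

section Decomposition

variable {V R : Type*} [Fintype V] [CommRing R] [LinearOrder R] {w f g h : V → R} {a b : R}

theorem weightedL1Error_eq_mul_weightedHammingDist [IsOrderedAddMonoid R] (hab : a ≤ b)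
    (hg : ∀ v, g v = a ∨ g v = b) (hh : ∀ v, h v = a ∨ h v = b) :
    weightedL1Error w g h = (b - a) * weightedHammingDist w g h := by
  simp only [weightedL1Error, weightedHammingDist, mul_comm (b - a), Finset.sum_mul,
    abs_sub_eq_ite_of_eq_or_eq hab (hh _) (hg _), mul_ite, ite_mul, mul_zero, zero_mul, mul_one]

theorem weightedL1Error_eq_add_mul_weightedHammingDist [IsOrderedAddMonoid R] (hab : a ≤ b)
    (hgap : ∀ v, f v ≤ a ∨ b ≤ f v) (hh : ∀ v, h v = a ∨ h v = b) :
    weightedL1Error w f h = weightedL1Error w f (fun v => roundToEndpoints a b (f v)) +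
      (b - a) * weightedHammingDist w (fun v => roundToEndpoints a b (f v)) h := by
  have hmem (v : V) : h v ∈ Set.Icc a b := by
    rcases hh v with hv | hv <;> simp [hv, hab]
  rw [weightedL1Error_eq_add_of_mem_uIcc fun v => roundToEndpoints_mem_uIcc (hgap v) (hmem v),
    weightedL1Error_eq_mul_weightedHammingDist hab
      (fun v => roundToEndpoints_eq_or_eq a b (f v)) hh]

theorem L1_decomposition_binary_general [IsStrictOrderedRing R] (w : V → R) (hab : a < b)
    (hgap : ∀ v, f v ≤ a ∨ b ≤ f v) (hg : ∀ v, g v = roundToEndpoints a b (f v)) :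
    (∀ h : V → R, (∀ v, h v = a ∨ h v = b) →
      weightedL1Error w f h = weightedL1Error w f g + (b - a) * weightedHammingDist w g h) ∧
    ∀ S : Set (V → R), (∀ h ∈ S, ∀ v, h v = a ∨ h v = b) → ∀ h ∈ S,
      (IsMinOn (weightedL1Error w f) S h ↔ IsMinOn (weightedHammingDist w g) S h) := by
  obtain rfl : g = fun v => roundToEndpoints a b (f v) := funext hg
  have decomposition (h : V → R) (hh : ∀ v, h v = a ∨ h v = b) :=
    weightedL1Error_eq_add_mul_weightedHammingDist (w := w) hab.le hgap hh
  have affine_strictMono (c : R) : StrictMono fun t => c + (b - a) * t :=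
    (strictMono_mul_left_of_pos (sub_pos.2 hab)).const_add c
  exact ⟨decomposition, fun S hS h hh => isMinOn_iff_of_eqOn_strictMono_comp
    (affine_strictMono _) (fun h' hh' => decomposition h' (hS h' hh')) hh⟩

end Decomposition

/-- Suppose no value of `f` lies in the open interval `(a,b)`, and let `g` round `f`
to `{a,b}`.  For any `{a,b}`-valued `h`, the weighted L1 error of `h` relative to `f`
decomposes as the L1 error of `g` plus `(b-a)` times the weighted Hamming distance from
`h` to `g`.  Consequently an isotonic `{a,b}`-valued `h` minimizes the weighted L1
distance to `f` among isotonic `{a,b}`-valued functions iff it minimizes the weighted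
Hamming distance to `g` among those functions. -/
theorem L1_decomposition_binary {V : Type*} [PartialOrder V] [Fintype V]
    (f w : V → ℝ) (hw : ∀ v, 0 ≤ w v) (a b : ℝ) (hab : a < b)
    (hgap : ∀ v : V, f v ≤ a ∨ b ≤ f v)
    (g : V → ℝ) (hg : ∀ v : V, g v = if f v ≤ a then a else b) :
    (∀ h : V → ℝ, (∀ v, h v = a ∨ h v = b) →
      ∑ v, w v * |h v - f v| =
        (∑ v, w v * |g v - f v|) +
          (b - a) * ∑ v, w v * (if h v = g v then 0 else 1)) ∧
    (∀ h : V → ℝ, Monotone h → (∀ v, h v = a ∨ h v = b) →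
      ((∀ h' : V → ℝ, Monotone h' → (∀ v, h' v = a ∨ h' v = b) →
          ∑ v, w v * |h v - f v| ≤ ∑ v, w v * |h' v - f v|) ↔
       (∀ h' : V → ℝ, Monotone h' → (∀ v, h' v = a ∨ h' v = b) →
          ∑ v, w v * (if h v = g v then 0 else 1) ≤
            ∑ v, w v * (if h' v = g v then 0 else 1)))) := by
  refine (L1_decomposition_binary_general w hab hgap hg).imp id fun minimizers h hmono hh => ?_
  simpa only [isMinOn_iff, Set.mem_ofPred_eq, and_imp] using!
    minimizers {h | Monotone h ∧ ∀ v, h v = a ∨ h v = b} (fun _ hh' => hh'.2) h ⟨hmono, hh⟩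
end

section
/- Let g : V → ℝ be the unique isotonic function minimizing the weighted L2 error ∑_{v} w(v)·(g(v) − f(v))². Then for every value c in the range of g, the value c equals the weighted mean of f over the level set L = {v ∈ V : g(v) = c}; that is, c = (∑_{v ∈ L} w(v) f(v)) / (∑_{v ∈ L} w(v)). -/
open scoped Classical

/-!
Move a single level `c` of the minimizer `g` to a nearby value `y`. As `g` has finitely many values,
the result is still isotonic once `y` is close enough to `c` on either side, so the total loss, as a
function of `y`, has a local minimum at `c` and its derivative vanishes there. For the weighted
squared error this says `∑ w v * (c - f v) = 0` over the level set.
-/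

open Filter Topology

/-- The function `g` with its value on the level set `{v | g v = c}` replaced by `y`: the
one-parameter variation of `g` that moves one level and fixes all others. -/
def replaceLevel {V α : Type*} [DecidableEq α] (g : V → α) (c y : α) (v : V) : α :=
  if g v = c then y else g v

section ReplaceLevel

variable {V α : Type*}

theorem replaceLevel_self [DecidableEq α] (g : V → α) (c : α) : replaceLevel g c c = g := by
  ext v
  simp +contextual [replaceLevel, eq_comm]

theorem monotone_replaceLevel [Preorder V] [LinearOrder α] {g : V → α} (hg : Monotone g) {c y : α}
    (hlt : ∀ v, g v < c → g v ≤ y) (hgt : ∀ v, c < g v → y ≤ g v) :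
    Monotone (replaceLevel g c y) := by
  intro a b hab
  have hgab : g a ≤ g b := hg hab
  unfold replaceLevel
  split_ifs with ha hb hb
  · exact le_rfl
  · exact hgt b ((ha ▸ hgab).lt_of_ne' hb)
  · exact hlt a ((hb ▸ hgab).lt_of_ne ha)
  · exact hgab

theorem eventually_monotone_replaceLevel [Preorder V] [LinearOrder α] [TopologicalSpace α]
    [OrderTopology α] {g : V → α} (hg : Monotone g) (hfin : (Set.range g).Finite) (c : α) :
    ∀ᶠ y in 𝓝 c, Monotone (replaceLevel g c y) := by
  have hlt : ∀ᶠ y in 𝓝 c, ∀ x ∈ Set.range g, x < c → x ≤ y :=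
    (eventually_all_finite hfin).2 fun _ _ => eventually_imp_distrib_left.2 eventually_ge_nhds
  have hgt : ∀ᶠ y in 𝓝 c, ∀ x ∈ Set.range g, c < x → y ≤ x :=
    (eventually_all_finite hfin).2 fun _ _ => eventually_imp_distrib_left.2 eventually_le_nhds
  filter_upwards [hlt, hgt] with y hlt hgt
  exact monotone_replaceLevel hg (fun v => hlt _ ⟨v, rfl⟩) fun v => hgt _ ⟨v, rfl⟩

end ReplaceLevel

section SeparableLoss

variable {V : Type*} [Fintype V] {g : V → ℝ} {loss : V → ℝ → ℝ} {c : ℝ}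

theorem hasDerivAt_sum_replaceLevel {loss' : V → ℝ}
    (hloss : ∀ v, g v = c → HasDerivAt (loss v) (loss' v) c) :
    HasDerivAt (fun y => ∑ v, loss v (replaceLevel g c y v)) (∑ v with g v = c, loss' v) c := by
  rw [Finset.sum_filter]
  refine HasDerivAt.fun_sum fun v _ => ?_
  unfold replaceLevel
  split_ifs with hv
  · exact hloss v hv
  · exact hasDerivAt_const c _

theorem isLocalMin_sum_replaceLevel [Preorder V] (hg : Monotone g)
    (hmin : ∀ h : V → ℝ, Monotone h → ∑ v, loss v (g v) ≤ ∑ v, loss v (h v)) :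
    IsLocalMin (fun y => ∑ v, loss v (replaceLevel g c y v)) c := by
  filter_upwards [eventually_monotone_replaceLevel hg (Set.finite_range g) c] with y hy
  simpa only [replaceLevel_self] using hmin _ hy

theorem sum_deriv_levelSet_eq_zero [Preorder V] (hg : Monotone g)
    (hmin : ∀ h : V → ℝ, Monotone h → ∑ v, loss v (g v) ≤ ∑ v, loss v (h v))
    {loss' : V → ℝ} (hloss : ∀ v, g v = c → HasDerivAt (loss v) (loss' v) c) :
    ∑ v with g v = c, loss' v = 0 :=
  (isLocalMin_sum_replaceLevel hg hmin).hasDerivAt_eq_zero (hasDerivAt_sum_replaceLevel hloss)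

end SeparableLoss

theorem hasDerivAt_mul_sub_sq {𝕜 : Type*} [NontriviallyNormedField 𝕜] (a b x : 𝕜) :
    HasDerivAt (fun y => a * (y - b) ^ 2) (2 * (a * x - a * b)) x := by
  refine ((((hasDerivAt_id' x).sub_const b).fun_pow 2).const_mul a).congr_deriv ?_
  ring

theorem L2_level_set_mean_general {V : Type*} [Preorder V] [Fintype V] {f w g : V → ℝ}
    (hg : Monotone g)
    (hmin : ∀ h : V → ℝ, Monotone h →
      ∑ v, w v * (g v - f v) ^ 2 ≤ ∑ v, w v * (h v - f v) ^ 2)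
    {c : ℝ} (hc : ∑ v with g v = c, w v ≠ 0) :
    c = (∑ v with g v = c, w v * f v) / ∑ v with g v = c, w v := by
  have hstationary : ∑ v with g v = c, 2 * (w v * c - w v * f v) = 0 :=
    sum_deriv_levelSet_eq_zero (loss := fun v y => w v * (y - f v) ^ 2) hg hmin
      fun v _ => hasDerivAt_mul_sub_sq (w v) (f v) c
  rw [← Finset.mul_sum, Finset.sum_sub_distrib, ← Finset.sum_mul] at hstationary
  rw [eq_div_iff hc]
  linarith

/-- Each regression value of the L2 isotonic regression equals the weighted mean of `f`
over the corresponding level set. -/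
theorem L2_level_set_mean {V : Type*} [PartialOrder V] [Fintype V] [Nonempty V]
    (f w : V → ℝ) (hw : ∀ v, 0 < w v) (g : V → ℝ) (hg : Monotone g)
    (hmin : ∀ h : V → ℝ, Monotone h →
      ∑ v, w v * (g v - f v) ^ 2 ≤ ∑ v, w v * (h v - f v) ^ 2) :
    ∀ c ∈ Set.range g,
      c = (∑ v ∈ Finset.univ.filter (fun v => g v = c), w v * f v) /
          (∑ v ∈ Finset.univ.filter (fun v => g v = c), w v) := by
  rintro c ⟨v₀, hv₀⟩
  exact L2_level_set_mean_general hg hmin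
    (Finset.sum_pos (fun v _ => hw v) ⟨v₀, by simpa using hv₀⟩).ne'
end

section
/- (Completeness and uniqueness of Steiner coordinates.) Let q, r be binary strings of length k with val(q) < val(r). Then there exists exactly one Steiner string t of length k containing at least one * such that q ⊑ t and t ⊑ r, namely the Steiner string whose binary prefix is the longest common prefix of q and r, followed by *'s. -/
/-- The value of a binary string of length `k`, most significant bit first. -/
def val {k : ℕ} (q : Fin k → Bool) : ℕ :=
  ∑ i : Fin k, if q i then 2 ^ (k - 1 - (i : ℕ)) else 0

/-- A Steiner string of length `k`: a binary prefix followed by `*`'s (here a `*` is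
encoded as `none`), so the `none` positions form a suffix. -/
structure SteinerStr (k : ℕ) where
  t : Fin k → Option Bool
  suffix : ∀ i j : Fin k, i ≤ j → t i = none → t j = none

/-- A Steiner string contains a `*` iff some position is `none`. -/
def SteinerStr.hasStar {k : ℕ} (s : SteinerStr k) : Prop := ∃ i, s.t i = none

/-- `q ⊑ t` for a binary string `q` and Steiner string `t` with binary prefix `p` of
length `ℓ`: `q` agrees with `p` on the prefix and, if `ℓ < k`, the bit of `q` at the
first `*` position is `0`. -/
def belowSteiner {k : ℕ} (q : Fin k → Bool) (s : SteinerStr k) : Prop :=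
  (∀ i : Fin k, ∀ b : Bool, s.t i = some b → q i = b) ∧
  (∀ i : Fin k, s.t i = none → (∀ j : Fin k, j < i → (s.t j).isSome) → q i = false)

/-- `t ⊑ q` for a Steiner string `t` with binary prefix `p` of length `ℓ` and a binary
string `q`: `q` agrees with `p` on the prefix and, if `ℓ < k`, the bit of `q` at the
first `*` position is `1`. -/
def steinerBelow {k : ℕ} (s : SteinerStr k) (q : Fin k → Bool) : Prop :=
  (∀ i : Fin k, ∀ b : Bool, s.t i = some b → q i = b) ∧
  (∀ i : Fin k, s.t i = none → (∀ j : Fin k, j < i → (s.t j).isSome) → q i = true)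

/-!
On binary strings of length `k`, `val` is strictly monotone for the lexicographic order, because the
bits after a position `i` contribute less than the bit at `i` alone. So `val q < val r` produces a
first position `i` where `q` and `r` differ, with `q i = 0` and `r i = 1`. Conversely, if a Steiner
string `t` with first `*` at `i` satisfies `q ⊑ t` and `t ⊑ r`, then `q` and `r` both agree with `t`
before `i`, and `q i = 0`, `r i = 1`; hence `i` must be that first difference.
-/

section LexLTAt

variable {ι α : Type*}

/-- The position `i` witnesses that `x` is lexicographically smaller than `y`: it is the first
position where the two differ, and `x` is smaller there. This is the body of the existential in
`Pi.Lex`. -/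
def LexLTAt [LT ι] [LT α] (x y : ι → α) (i : ι) : Prop :=
  (∀ j < i, x j = y j) ∧ x i < y i

variable [LinearOrder ι] [Preorder α] {x y : ι → α} {i j : ι}

theorem LexLTAt.lt_iff_forall_le_eq (h : LexLTAt x y i) : j < i ↔ ∀ l ≤ j, x l = y l :=
  ⟨fun hji l hl => h.1 l (hl.trans_lt hji),
    fun heq => not_le.1 fun hij => h.2.ne (heq i hij)⟩

theorem LexLTAt.unique (hi : LexLTAt x y i) (hj : LexLTAt x y j) : i = j :=
  eq_of_forall_lt_iff fun _ => hi.lt_iff_forall_le_eq.trans hj.lt_iff_forall_le_eq.symm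

end LexLTAt

section val

variable {k : ℕ}

theorem val_eq_add_val_tail (q : Fin (k + 1) → Bool) :
    val q = (if q 0 then 2 ^ k else 0) + val (Fin.tail q) := by
  rw [val, Fin.sum_univ_succ]
  refine congrArg₂ _ (by simp) (Finset.sum_congr rfl fun i _ => ?_)
  have exponent_succ : k + 1 - 1 - (i.succ : ℕ) = k - 1 - (i : ℕ) := by
    rw [Fin.val_succ]
    omega
  rw [exponent_succ, Fin.tail]

theorem val_lt_two_pow (q : Fin k → Bool) : val q < 2 ^ k := by
  induction k with
  | zero => simp [val]
  | succ k ih =>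
    have tail_lt := ih (Fin.tail q)
    rw [val_eq_add_val_tail, pow_succ]
    split_ifs <;> omega

theorem LexLTAt.val_lt_val {q r : Fin k → Bool} {i : Fin k} (h : LexLTAt q r i) :
    val q < val r := by
  induction k with
  | zero => exact i.elim0
  | succ k ih =>
    obtain ⟨heq, hlt⟩ := h
    rw [val_eq_add_val_tail q, val_eq_add_val_tail r]
    cases i using Fin.cases with
    | zero =>
      obtain ⟨hq, hr⟩ := Bool.lt_iff.1 hlt
      simpa [hq, hr] using (val_lt_two_pow (Fin.tail q)).trans_le (Nat.le_add_right _ _)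
    | succ i =>
      have tail_lexLTAt : LexLTAt (Fin.tail q) (Fin.tail r) i :=
        ⟨fun j hj => heq j.succ (Fin.succ_lt_succ_iff.2 hj), hlt⟩
      rw [heq 0 i.succ_pos]
      exact Nat.add_lt_add_left (ih tail_lexLTAt) _

theorem val_comp_ofLex_strictMono : StrictMono fun q : Lex (Fin k → Bool) => val (ofLex q) :=
  fun _ _ ⟨_, h⟩ => LexLTAt.val_lt_val h

theorem val_lt_val_iff_exists_lexLTAt {q r : Fin k → Bool} :
    val q < val r ↔ ∃ i, LexLTAt q r i :=
  val_comp_ofLex_strictMono.lt_iff_lt (a := toLex q) (b := toLex r)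

end val

attribute [ext] SteinerStr

namespace SteinerStr

variable {k : ℕ} {s : SteinerStr k} {q r : Fin k → Bool} {i j : Fin k}

/-- The first `*` of `s` is at position `i`; equivalently, the binary prefix of `s` has length `i`
(positions being counted from `0`). -/
def IsFirstStar (s : SteinerStr k) (i : Fin k) : Prop :=
  s.t i = none ∧ ∀ j < i, (s.t j).isSome

theorem hasStar.exists_isFirstStar (h : s.hasStar) : ∃ i, s.IsFirstStar i := by
  obtain ⟨i, hi, hmin⟩ := wellFounded_lt.has_min {i | s.t i = none} h
  exact ⟨i, hi, fun j hji => Option.isSome_iff_ne_none.2 fun hj => hmin j hj hji⟩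

theorem IsFirstStar.t_eq_none_iff (h : s.IsFirstStar i) : s.t j = none ↔ i ≤ j :=
  ⟨fun hj => not_lt.1 fun hji => Option.isSome_iff_ne_none.1 (h.2 j hji) hj,
    fun hij => s.suffix i j hij h.1⟩

theorem IsFirstStar.unique (hi : s.IsFirstStar i) (hj : s.IsFirstStar j) : i = j :=
  le_antisymm (hi.t_eq_none_iff.1 hj.1) (hj.t_eq_none_iff.1 hi.1)

/-- The Steiner string obtained from the binary string `q` by replacing every bit from position `i`
on by `*`. As `i : Fin k`, it always contains a `*`. -/
def starFrom (q : Fin k → Bool) (i : Fin k) : SteinerStr k where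
  t j := if j < i then some (q j) else none
  suffix a b hab ha := by
    have hia : ¬a < i := by simpa using ha
    exact if_neg fun hbi => hia (hab.trans_lt hbi)

theorem starFrom_t_eq_some_iff {b : Bool} : (starFrom q i).t j = some b ↔ j < i ∧ q j = b := by
  simp [starFrom]

theorem isFirstStar_starFrom (q : Fin k → Bool) (i : Fin k) : (starFrom q i).IsFirstStar i := by
  simp +contextual [IsFirstStar, starFrom]

theorem starFrom_eq_starFrom_iff : starFrom q i = starFrom r i ↔ ∀ j < i, q j = r j := by
  refine ⟨fun h j hji => ?_, fun h => ?_⟩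
  · have hr : (starFrom q i).t j = some (r j) := h ▸ starFrom_t_eq_some_iff.2 ⟨hji, rfl⟩
    exact (starFrom_t_eq_some_iff.1 hr).2
  · ext j b
    simp only [starFrom_t_eq_some_iff]
    exact and_congr_right fun hji => by rw [h j hji]

theorem IsFirstStar.extends_iff_eq_starFrom (h : s.IsFirstStar i) :
    (∀ j b, s.t j = some b → q j = b) ↔ s = starFrom q i := by
  refine ⟨fun hext => ?_, fun heq j b hb => ?_⟩
  · ext j : 2
    by_cases hji : j < i
    · obtain ⟨b, hb⟩ := Option.isSome_iff_exists.1 (h.2 j hji)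
      rw [hb, starFrom_t_eq_some_iff.2 ⟨hji, hext j b hb⟩]
    · have hij := not_lt.1 hji
      rw [h.t_eq_none_iff.2 hij, (isFirstStar_starFrom q i).t_eq_none_iff.2 hij]
  · rw [heq] at hb
    exact (starFrom_t_eq_some_iff.1 hb).2

theorem IsFirstStar.forall_firstStar_iff (h : s.IsFirstStar i) {p : Fin k → Prop} :
    (∀ j, s.t j = none → (∀ l, l < j → (s.t l).isSome) → p j) ↔ p i :=
  ⟨fun hp => hp i h.1 h.2, fun hp _ hnone hsome => h.unique ⟨hnone, hsome⟩ ▸ hp⟩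

theorem IsFirstStar.belowSteiner_iff (h : s.IsFirstStar i) :
    belowSteiner q s ↔ s = starFrom q i ∧ q i = false :=
  and_congr h.extends_iff_eq_starFrom h.forall_firstStar_iff

theorem IsFirstStar.steinerBelow_iff (h : s.IsFirstStar i) :
    steinerBelow s q ↔ s = starFrom q i ∧ q i = true :=
  and_congr h.extends_iff_eq_starFrom h.forall_firstStar_iff

theorem IsFirstStar.lexLTAt (h : s.IsFirstStar i) (hq : belowSteiner q s)
    (hr : steinerBelow s r) : LexLTAt q r i := by
  obtain ⟨hsq, hqi⟩ := h.belowSteiner_iff.1 hq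
  obtain ⟨hsr, hri⟩ := h.steinerBelow_iff.1 hr
  exact ⟨starFrom_eq_starFrom_iff.1 (hsq.symm.trans hsr), Bool.lt_iff.2 ⟨hqi, hri⟩⟩

theorem hasStar_and_between_iff_eq_starFrom (h : LexLTAt q r i) :
    (s.hasStar ∧ belowSteiner q s ∧ steinerBelow s r) ↔ s = starFrom q i := by
  constructor
  · rintro ⟨hstar, hq, hr⟩
    obtain ⟨l, hl⟩ := hstar.exists_isFirstStar
    obtain rfl : l = i := (hl.lexLTAt hq hr).unique h
    exact (hl.belowSteiner_iff.1 hq).1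
  · rintro rfl
    have hfirst := isFirstStar_starFrom q i
    obtain ⟨hqi, hri⟩ := Bool.lt_iff.1 h.2
    exact ⟨⟨i, hfirst.1⟩, hfirst.belowSteiner_iff.2 ⟨rfl, hqi⟩,
      hfirst.steinerBelow_iff.2 ⟨starFrom_eq_starFrom_iff.2 h.1, hri⟩⟩

end SteinerStr

/-- Completeness and uniqueness of Steiner coordinates: if `val q < val r` then there is
exactly one Steiner string `t` containing a `*` with `q ⊑ t` and `t ⊑ r`; moreover this
`t` is the Steiner string whose binary prefix is the longest common prefix of `q` and
`r`, followed by `*`'s. -/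
theorem steiner_complete_unique {k : ℕ} (hk : 1 ≤ k) (q r : Fin k → Bool)
    (hlt : val q < val r) :
    (∃! t : SteinerStr k, t.hasStar ∧ belowSteiner q t ∧ steinerBelow t r) ∧
    (∀ t : SteinerStr k, t.hasStar → belowSteiner q t → steinerBelow t r →
      ∀ i : Fin k, t.t i = some (q i) ↔ ∀ j : Fin k, j ≤ i → q j = r j) := by
  obtain ⟨i, hi⟩ := val_lt_val_iff_exists_lexLTAt.1 hlt
  have between_iff (t : SteinerStr k) :
      (t.hasStar ∧ belowSteiner q t ∧ steinerBelow t r) ↔ t = .starFrom q i :=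
    SteinerStr.hasStar_and_between_iff_eq_starFrom hi
  refine ⟨⟨.starFrom q i, (between_iff _).2 rfl, fun t => (between_iff t).1⟩,
    fun t hstar hq hr j => ?_⟩
  calc t.t j = some (q j)
    _ ↔ (SteinerStr.starFrom q i).t j = some (q j) := by rw [(between_iff t).1 ⟨hstar, hq, hr⟩]
    _ ↔ j < i := by simp only [SteinerStr.starFrom_t_eq_some_iff, and_true]
    _ ↔ ∀ l ≤ j, q l = r l := hi.lt_iff_forall_le_eq
end
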